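/- Let α ∈ {0, 1, 2}, let r > 0, and let f : ℝ → ℝ be three times continuously differentiable on a neighborhood of r. Then there exist constants C > 0 and δ > 0 such that for all h with 0 < h < δ, setting r₊ = r + h/2, r₋ = r − h/2, and ΔV = (r₊^{α+1} − r₋^{α+1})/(α+1), one has | (f(r₊)·r₊^α − f(r₋)·r₋^α)/ΔV − ( f'(r) + α·f(r)/r ) | ≤ C·h². (The finite-volume divergence approximation of Method Two is a second-order accurate, but not higher-order, consistent approximation of (1/r^α)∂_r(r^α f)(r) = f'(r) + αf(r)/r.) -/

import Mathlib

/-!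
Writing `g x = f x * x ^ α` and `V x = x ^ (α + 1) / (α + 1)`, the scheme is the quotient of the
central differences of `g` and `V` at `r`. In a central difference the even Taylor terms cancel, so
`g (r + k) - g (r - k) = 2 * k * g' r + O(k ^ 3)`, and likewise for `V`. Since `V' r = r ^ α` does
not vanish, dividing the two expansions gives `g' r / V' r + O(k ^ 2)`, and the product rule
identifies `g' r / V' r` with `f' r + α * f r / r`.
-/

open Asymptotics Filter Topology

section Taylor

variable {E : Type*} [NormedAddCommGroup E] [NormedSpace ℝ E] {f : ℝ → E} {x₀ : ℝ}

theorem taylor_isLittleO_of_contDiffAt {n : ℕ} (hf : ContDiffAt ℝ n f x₀) :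
    (fun x ↦ f x - ∑ i ∈ Finset.range (n + 1),
      ((i.factorial : ℝ)⁻¹ * (x - x₀) ^ i) • iteratedDeriv i f x₀)
      =o[𝓝 x₀] fun x ↦ (x - x₀) ^ n := by
  obtain ⟨u, hu, hfu⟩ := hf.contDiffOn le_rfl (by simp)
  obtain ⟨ε, hε, hball⟩ := Metric.mem_nhds_iff.1 hu
  have hx₀ : x₀ ∈ Metric.ball x₀ ε := Metric.mem_ball_self hε
  have taylor := taylor_isLittleO (convex_ball x₀ ε) hx₀ (hfu.mono hball)
  simpa only [Metric.isOpen_ball.nhdsWithin_eq hx₀, taylor_within_apply,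
    iteratedDerivWithin_of_isOpen Metric.isOpen_ball hx₀] using taylor

theorem taylor_isBigO_of_contDiffAt {n : ℕ} (hf : ContDiffAt ℝ (n + 1) f x₀) :
    (fun x ↦ f x - ∑ i ∈ Finset.range (n + 1),
      ((i.factorial : ℝ)⁻¹ * (x - x₀) ^ i) • iteratedDeriv i f x₀)
      =O[𝓝 x₀] fun x ↦ (x - x₀) ^ (n + 1) := by
  have top_term : (fun x ↦ (((n + 1).factorial : ℝ)⁻¹ * (x - x₀) ^ (n + 1)) •
      iteratedDeriv (n + 1) f x₀) =O[𝓝 x₀] fun x ↦ (x - x₀) ^ (n + 1) := by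
    simpa using ((isBigO_refl (fun x : ℝ ↦ (x - x₀) ^ (n + 1)) (𝓝 x₀)).const_mul_left
      ((n + 1).factorial : ℝ)⁻¹).smul
        (isBigO_const_const (iteratedDeriv (n + 1) f x₀) (one_ne_zero (α := ℝ)) (𝓝 x₀))
  refine ((taylor_isLittleO_of_contDiffAt (n := n + 1) (mod_cast hf)).isBigO.add
    top_term).congr_left fun x ↦ ?_
  rw [Finset.sum_range_succ _ (n + 1)]
  abel

theorem central_difference_sub_isBigO (hf : ContDiffAt ℝ 3 f x₀) :
    (fun k ↦ f (x₀ + k) - f (x₀ - k) - (2 * k) • deriv f x₀) =O[𝓝 0] fun k ↦ k ^ 3 := by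
  have taylor := taylor_isBigO_of_contDiffAt (n := 2) (mod_cast hf)
  have right : Tendsto (fun k ↦ x₀ + k) (𝓝 0) (𝓝 x₀) :=
    Continuous.tendsto' (by fun_prop) _ _ (add_zero x₀)
  have left : Tendsto (fun k ↦ x₀ - k) (𝓝 0) (𝓝 x₀) :=
    Continuous.tendsto' (by fun_prop) _ _ (sub_zero x₀)
  have taylor_right := taylor.comp_tendsto right
  have taylor_left := taylor.comp_tendsto left
  simp only [Function.comp_def, add_sub_cancel_left, sub_sub_cancel_left, Nat.reduceAdd,
    Finset.sum_range_succ, Finset.sum_range_zero, iteratedDeriv_one] at taylor_right taylor_left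
  have neg_pow_isBigO : (fun k : ℝ ↦ (-k) ^ 3) =O[𝓝 0] fun k ↦ k ^ 3 :=
    isBigO_of_le _ fun k ↦ by simp
  refine (taylor_right.sub (taylor_left.trans neg_pow_isBigO)).congr_left fun k ↦ ?_
  simp only [Nat.factorial]
  module

end Taylor

theorem div_sub_div_isBigO {ι 𝕜 : Type*} [NormedField 𝕜] {l : Filter ι} {u v w e : ι → 𝕜}
    {a b : 𝕜} (hb : b ≠ 0) (hw : ∀ᶠ i in l, w i ≠ 0) (he : Tendsto e l (𝓝 0))
    (hu : (fun i ↦ u i - w i * a) =O[l] fun i ↦ w i * e i)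
    (hv : (fun i ↦ v i - w i * b) =O[l] fun i ↦ w i * e i) :
    (fun i ↦ u i / v i - a / b) =O[l] e := by
  have v_equiv : v ~[l] fun i ↦ w i * b := by
    have we_isLittleO : (fun i ↦ w i * e i) =o[l] fun i ↦ w i * b :=
      (isBigO_refl w l).mul_isLittleO
        ((isLittleO_one_iff 𝕜).2 he |>.trans_isBigO (isBigO_const_const 1 hb l))
    exact hv.trans_isLittleO we_isLittleO
  have w_isBigO_v : w =O[l] v :=
    IsBigO.trans (by simpa only [mul_comm b] using isBigO_self_const_mul hb w l)
      v_equiv.isBigO_symm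
  have v_ne_zero : ∀ᶠ i in l, v i ≠ 0 := by
    filter_upwards [hw, w_isBigO_v.eq_zero_imp] with i hwi himp using mt himp hwi
  have inv_v_isBigO : (fun i ↦ (v i)⁻¹) =O[l] fun i ↦ (w i)⁻¹ :=
    w_isBigO_v.inv_rev (hw.mono fun i hwi h ↦ absurd h hwi)
  have numerator_isBigO : (fun i ↦ b⁻¹ * (b * (u i - w i * a) - a * (v i - w i * b)))
      =O[l] fun i ↦ w i * e i :=
    ((hu.const_mul_left b).sub (hv.const_mul_left a)).const_mul_left b⁻¹
  refine (numerator_isBigO.mul inv_v_isBigO).congr' ?_ ?_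
  · filter_upwards [v_ne_zero] with i hvi
    field_simp
    ring
  · filter_upwards [hw] with i hwi
    field_simp

theorem central_difference_div_sub_isBigO {f g : ℝ → ℝ} {x₀ : ℝ} (hf : ContDiffAt ℝ 3 f x₀)
    (hg : ContDiffAt ℝ 3 g x₀) (hg' : deriv g x₀ ≠ 0) :
    (fun k ↦ (f (x₀ + k) - f (x₀ - k)) / (g (x₀ + k) - g (x₀ - k)) - deriv f x₀ / deriv g x₀)
      =O[𝓝[≠] 0] fun k ↦ k ^ 2 := by
  have cube_isBigO : (fun k : ℝ ↦ k ^ 3) =O[𝓝[≠] 0] fun k ↦ 2 * k * k ^ 2 :=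
    ((isBigO_refl _ _).const_mul_left (1 / 2)).congr_left fun k ↦ by ring
  have square_tendsto : Tendsto (fun k : ℝ ↦ k ^ 2) (𝓝[≠] 0) (𝓝 0) :=
    (Continuous.tendsto' (by fun_prop) 0 0 (by simp)).mono_left nhdsWithin_le_nhds
  refine div_sub_div_isBigO hg' ?_ square_tendsto
    (((central_difference_sub_isBigO hf).mono nhdsWithin_le_nhds).trans cube_isBigO)
    (((central_difference_sub_isBigO hg).mono nhdsWithin_le_nhds).trans cube_isBigO)
  filter_upwards [self_mem_nhdsWithin] with k hk using mul_ne_zero two_ne_zero hk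

theorem deriv_mul_pow_div_pow {𝕜 : Type*} [NontriviallyNormedField 𝕜] {f : 𝕜 → 𝕜} {r : 𝕜}
    (hf : DifferentiableAt 𝕜 f r) (hr : r ≠ 0) (α : ℕ) :
    deriv (fun x ↦ f x * x ^ α) r / r ^ α = deriv f r + α * f r / r := by
  rw [(hf.hasDerivAt.fun_mul (hasDerivAt_pow α r)).deriv]
  cases α with
  | zero => simp
  | succ n =>
    simp only [Nat.add_sub_cancel]
    field_simp
    ring

theorem deriv_pow_succ_div {𝕜 : Type*} [NontriviallyNormedField 𝕜] [CharZero 𝕜]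
    (α : ℕ) (r : 𝕜) : deriv (fun x : 𝕜 ↦ x ^ (α + 1) / (α + 1)) r = r ^ α := by
  have : (α : 𝕜) + 1 ≠ 0 := α.cast_add_one_ne_zero
  simp [field]

theorem exists_forall_norm_le_mul_pow_of_isBigO {E : Type*} [Norm E] {u : ℝ → E} {n : ℕ}
    (hu : u =O[𝓝[>] 0] fun h ↦ h ^ n) :
    ∃ C > (0 : ℝ), ∃ δ > (0 : ℝ), ∀ h, 0 < h → h < δ → ‖u h‖ ≤ C * h ^ n := by
  obtain ⟨C, hC, hbound⟩ := hu.exists_pos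
  obtain ⟨δ, hδ, hsub⟩ := mem_nhdsGT_iff_exists_Ioo_subset.1 hbound.bound
  refine ⟨C, hC, δ, hδ, fun h hpos hlt ↦ ?_⟩
  simpa [abs_of_pos hpos] using hsub ⟨hpos, hlt⟩

theorem stmt_1_general (α : ℕ) {r : ℝ} (hr : r ≠ 0) {f : ℝ → ℝ} (hf : ContDiffAt ℝ 3 f r) :
    ∃ C > (0 : ℝ), ∃ δ > (0 : ℝ), ∀ h : ℝ, 0 < h → h < δ →
      |(f (r + h / 2) * (r + h / 2) ^ α - f (r - h / 2) * (r - h / 2) ^ α) /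
          (((r + h / 2) ^ (α + 1) - (r - h / 2) ^ (α + 1)) / ((α : ℝ) + 1))
        - (deriv f r + (α : ℝ) * f r / r)| ≤ C * h ^ 2 := by
  have flux_contDiffAt : ContDiffAt ℝ 3 (fun x ↦ f x * x ^ α) r := hf.mul (contDiffAt_id.pow α)
  have volume_contDiffAt : ContDiffAt ℝ 3 (fun x : ℝ ↦ x ^ (α + 1) / (α + 1)) r := by fun_prop
  have quotient := central_difference_div_sub_isBigO flux_contDiffAt volume_contDiffAt
    (by rw [deriv_pow_succ_div]; exact pow_ne_zero α hr)
  simp only [deriv_pow_succ_div, deriv_mul_pow_div_pow (hf.differentiableAt (by norm_num)) hr,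
    ← sub_div] at quotient
  have half_tendsto : Tendsto (fun h : ℝ ↦ h / 2) (𝓝[>] 0) (𝓝[≠] 0) := by
    refine tendsto_nhdsWithin_iff.2 ⟨?_, ?_⟩
    · exact (Continuous.tendsto' (by fun_prop) 0 0 (by simp)).mono_left nhdsWithin_le_nhds
    · filter_upwards [self_mem_nhdsWithin] with h hpos using (half_pos hpos).ne'
  have half_sq_isBigO : (fun h : ℝ ↦ (h / 2) ^ 2) =O[𝓝[>] 0] fun h ↦ h ^ 2 :=
    ((isBigO_refl _ _).const_mul_left (1 / 4)).congr_left fun h ↦ by ring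
  exact exists_forall_norm_le_mul_pow_of_isBigO
    ((quotient.comp_tendsto half_tendsto).trans half_sq_isBigO)

/-- The finite-volume divergence approximation of Method Two is a second-order accurate
consistent approximation of `(1/r^α) ∂_r(r^α f)(r) = f'(r) + α f(r)/r`. -/
theorem stmt_1 (α : ℕ) (hα : α = 0 ∨ α = 1 ∨ α = 2) (r : ℝ) (hr : 0 < r)
    (f : ℝ → ℝ) (hf : ContDiffAt ℝ 3 f r) :
    ∃ C > (0:ℝ), ∃ δ > (0:ℝ), ∀ h : ℝ, 0 < h → h < δ →
      |(f (r + h/2) * (r + h/2) ^ α - f (r - h/2) * (r - h/2) ^ α) /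
          (((r + h/2) ^ (α + 1) - (r - h/2) ^ (α + 1)) / ((α : ℝ) + 1))
        - (deriv f r + (α : ℝ) * f r / r)| ≤ C * h ^ 2 :=
  stmt_1_general α hr.ne' hf
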